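/- Let F be a free group on a set with at least 3 elements, and let α ∈ F be any element. Then the one-relator quotient G = F/⟪α⟫ of F by the normal closure of α has trivial center. -/

import Mathlib

/-!
Let `G = F/⟪s⟫` with `F` free and let `1 ≠ z ∈ Z(G)`, with a lift `t ∈ F`. In the Fox calculus over
`ℂ[G]`, commuting with `t` expresses `(z - 1) • ∂x`, for each free generator `x`, through `∂t` and
the `∂r` with `r ∈ s`. Hence `(z - 1) I` of size `n` (the number of generators used) factors through
a free module of rank `|s| + 1`. If `n ≥ |s| + 2`, this contradicts the faithfulness of the von
Neumann trace on `ℂ[G]`: if `N M = w I` with `w` central, then `E = M w* N` satisfies `E² = w*w E`,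
and Kaplansky's positivity argument bounds its trace `n τ(w*w)` by `(|s| + 1) τ(w*w)`.
-/

open scoped InnerProduct lp ComplexConjugate commutatorElement

/-- `τ` is a positive trace on the star ring `R`. It takes values in `ℝ`: for complex traces this is
the real part. -/
structure IsPositiveTrace {R : Type*} [Ring R] [StarRing R] (τ : R →+ ℝ) : Prop where
  map_mul_comm : ∀ a b, τ (a * b) = τ (b * a)
  map_star_mul_self_nonneg : ∀ a, 0 ≤ τ (star a * a)

/-- Rickart `*`-rings: the right annihilator of every element is generated by a projection. -/
def IsRickart (R : Type*) [Ring R] [StarRing R] : Prop :=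
  ∀ a : R, ∃ p, IsStarProjection p ∧ ∀ x, a * x = 0 ↔ p * x = x

lemma star_matrix_scalar {κ R : Type*} [Fintype κ] [DecidableEq κ] [Semiring R] [StarRing R]
    (u : R) : star (Matrix.scalar κ u) = Matrix.scalar κ (star u) := by
  simp [Matrix.star_eq_conjTranspose, Matrix.diagonal_conjTranspose, Pi.star_def]

lemma map_matrix_trace_mul_comm {R S ι κ : Type*} [NonUnitalNonAssocSemiring R] [AddCommMonoid S]
    [Fintype ι] [Fintype κ] {τ : R →+ S} (hτ : ∀ a b, τ (a * b) = τ (b * a)) (A : Matrix ι κ R)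
    (B : Matrix κ ι R) : τ (A * B).trace = τ (B * A).trace := by
  simp only [Matrix.trace, Matrix.diag_apply, Matrix.mul_apply, map_sum]
  rw [Finset.sum_comm]
  simp only [hτ]

section Trace

variable {R : Type*} [Ring R] [StarRing R] {τ : R →+ ℝ}

lemma IsPositiveTrace.map_le_of_mul_self_eq (hτ : IsPositiveTrace τ) (hR : IsRickart R) {w e : R}
    (he : e * e = star w * w * e) : τ e ≤ τ (star w * w) := by
  -- `p` is the projection onto the kernel of `star e`, which contains the range of `star (e - c)`.
  obtain ⟨p, hp, hker⟩ := hR (star e)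
  set c := star w * w with hc
  have hep : star e * p = 0 := (hker p).2 hp.isIdempotentElem
  have hpe : p * e = 0 := by
    simpa [hp.isSelfAdjoint.star_eq] using congr_arg star hep
  have hsub : (e - c) * p = e - c := by
    have h : p * star (e - c) = star (e - c) :=
      (hker _).1 (by rw [← star_mul, sub_mul, he, sub_self, star_zero])
    simpa [hp.isSelfAdjoint.star_eq] using congr_arg star h
  have hcp : τ (c * p) = τ (star (w * p) * (w * p)) := by
    rw [star_mul, hp.isSelfAdjoint.star_eq, mul_assoc p, hτ.map_mul_comm p, ← mul_assoc (star w),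
      ← hc, mul_assoc c, hp.isIdempotentElem.eq]
  have : τ e - τ c = -τ (star (w * p) * (w * p)) := calc
    τ e - τ c = τ ((e - c) * p) := by rw [hsub, map_sub]
    _ = τ (p * e) - τ (c * p) := by rw [sub_mul, map_sub, hτ.map_mul_comm e]
    _ = -τ (star (w * p) * (w * p)) := by rw [hpe, map_zero, zero_sub, hcp]
  linarith [hτ.map_star_mul_self_nonneg (w * p)]

variable {ι κ : Type*} [Fintype ι] [Fintype κ]

lemma IsPositiveTrace.comp_matrix_trace [DecidableEq κ] (hτ : IsPositiveTrace τ) :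
    IsPositiveTrace (R := Matrix κ κ R) (τ.comp (Matrix.traceAddMonoidHom κ R)) where
  map_mul_comm := map_matrix_trace_mul_comm hτ.map_mul_comm
  map_star_mul_self_nonneg A := by
    simp only [AddMonoidHom.comp_apply, Matrix.traceAddMonoidHom_apply, Matrix.trace,
      Matrix.diag_apply, Matrix.mul_apply, Matrix.star_apply, map_sum]
    exact Finset.sum_nonneg fun i _ ↦ Finset.sum_nonneg fun j _ ↦
      hτ.map_star_mul_self_nonneg (A j i)

lemma IsPositiveTrace.card_mul_le_card_mul [DecidableEq ι] [DecidableEq κ]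
    (hτ : IsPositiveTrace τ) (hR : IsRickart (Matrix κ κ R)) {w : R} {N : Matrix ι κ R}
    {M : Matrix κ ι R} (hNM : N * M = Matrix.scalar ι w)
    (hM : ∀ k i, Commute (star w * w) (M k i)) :
    Fintype.card ι * τ (star w * w) ≤ Fintype.card κ * τ (star w * w) := by
  let T : Matrix ι κ R := Matrix.scalar ι (star w) * N
  have hTM : T * M = Matrix.scalar ι (star w * w) := by
    rw [Matrix.mul_assoc, hNM, ← map_mul]
  have hscalar : M * Matrix.scalar ι (star w * w) = Matrix.scalar κ (star w * w) * M := by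
    ext k i
    simp [(hM k i).eq]
  have hstar : Matrix.scalar κ (star w * w) = star (Matrix.scalar κ w) * Matrix.scalar κ w := by
    rw [map_mul, star_matrix_scalar]
  have hE : M * T * (M * T) = star (Matrix.scalar κ w) * Matrix.scalar κ w * (M * T) := by
    rw [← hstar, Matrix.mul_assoc, ← Matrix.mul_assoc T, hTM, ← Matrix.mul_assoc, hscalar,
      Matrix.mul_assoc]
  have hle := hτ.comp_matrix_trace.map_le_of_mul_self_eq hR hE
  rw [← hstar, AddMonoidHom.comp_apply, AddMonoidHom.comp_apply, Matrix.traceAddMonoidHom_apply,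
    Matrix.traceAddMonoidHom_apply, map_matrix_trace_mul_comm hτ.map_mul_comm, hTM] at hle
  simp only [Matrix.scalar_apply, Matrix.trace_diagonal, Finset.sum_const, map_nsmul] at hle
  simpa using hle

end Trace

section Rickart

lemma IsRickart.of_starRingEquiv {R S : Type*} [Ring R] [StarRing R] [Ring S] [StarRing S]
    (hR : IsRickart R) (f : R ≃⋆+* S) : IsRickart S := by
  intro a
  obtain ⟨p, hp, hker⟩ := hR (f.symm a)
  refine ⟨f p, hp.map f, fun x ↦ ?_⟩
  have := hker (f.symm x)
  rw [← map_mul, map_eq_zero_iff _ (EquivLike.injective f.symm)] at this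
  rw [this, ← (EquivLike.injective f).eq_iff, map_mul, f.apply_symm_apply]

lemma commute_of_isStarProjection_of_mul_eq_zero_iff {R : Type*} [Ring R] [StarRing R]
    {a p u : R} (hp : IsStarProjection p) (hker : ∀ x, a * x = 0 ↔ p * x = x) (hu : Commute u a)
    (hu' : Commute (star u) a) : Commute u p := by
  have hap : a * p = 0 := (hker p).2 hp.isIdempotentElem
  have invariant : ∀ v, Commute v a → p * (v * p) = v * p := fun v hv ↦
    (hker _).1 (by rw [← mul_assoc, ← hv.eq, mul_assoc, hap, mul_zero])
  have hstar := congr_arg star (invariant _ hu')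
  simp only [star_mul, star_star, hp.isSelfAdjoint.star_eq] at hstar
  rw [Commute, SemiconjBy, ← invariant u hu, ← mul_assoc, hstar]

lemma IsRickart.of_range_eq_centralizer {R S : Type*} [Ring R] [StarRing R] [Ring S] [StarRing S]
    (hR : IsRickart R) {f : S →+* R} (hf : Function.Injective f)
    (hstar : ∀ x, f (star x) = star (f x)) {U : Set R}
    (hU : ∀ x, x ∈ Set.range f ↔ ∀ u ∈ U, Commute u x ∧ Commute (star u) x) : IsRickart S := by
  intro a
  obtain ⟨p, hp, hker⟩ := hR (f a)
  have ha := (hU (f a)).1 ⟨a, rfl⟩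
  obtain ⟨q, rfl⟩ : p ∈ Set.range f := (hU p).2 fun u hu ↦
    ⟨commute_of_isStarProjection_of_mul_eq_zero_iff hp hker (ha u hu).1 (ha u hu).2,
      commute_of_isStarProjection_of_mul_eq_zero_iff hp hker (ha u hu).2
        (by simpa using (ha u hu).1)⟩
  refine ⟨q, ⟨hf ?_, hf ?_⟩, fun x ↦ ?_⟩
  · rw [map_mul, hp.isIdempotentElem.eq]
  · rw [hstar, hp.isSelfAdjoint.star_eq]
  · simpa only [← map_mul, map_eq_zero_iff f hf, hf.eq_iff] using hker (f x)

lemma IsRickart.matrix_centralizer {κ 𝕜 A : Type*} [Fintype κ] [DecidableEq κ]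
    [CommRing 𝕜] [StarRing 𝕜] [Ring A] [StarRing A] [Algebra 𝕜 A] [StarModule 𝕜 A]
    (hA : IsRickart (Matrix κ κ A)) (U : Set A) :
    IsRickart (Matrix κ κ (StarSubalgebra.centralizer 𝕜 U)) := by
  let f := (StarSubalgebra.centralizer 𝕜 U).subtype.toAlgHom.mapMatrix (m := κ)
  refine hA.of_range_eq_centralizer (f := (f : _ →+* Matrix κ κ A)) (U := Matrix.scalar κ '' U)
    (Matrix.map_injective Subtype.val_injective) (fun _ ↦ rfl) fun x ↦ ?_
  have hscalar : ∀ u, Commute (Matrix.scalar κ u) x ↔ ∀ k l, Commute u (x k l) := fun u ↦ by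
    simp [Commute, SemiconjBy, ← Matrix.ext_iff]
  simp only [Set.forall_mem_image, star_matrix_scalar, hscalar]
  constructor
  · rintro ⟨y, rfl⟩ u hu
    exact ⟨fun k l ↦ ((StarSubalgebra.mem_centralizer_iff 𝕜).1 (y k l).2 u hu).1,
      fun k l ↦ ((StarSubalgebra.mem_centralizer_iff 𝕜).1 (y k l).2 u hu).2⟩
  · intro h
    exact ⟨.of fun k l ↦ ⟨x k l, (StarSubalgebra.mem_centralizer_iff 𝕜).2 fun u hu ↦
      ⟨(h hu).1 k l, (h hu).2 k l⟩⟩, rfl⟩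

lemma isRickart_continuousLinearMap {𝕜 K : Type*} [RCLike 𝕜] [NormedAddCommGroup K]
    [InnerProductSpace 𝕜 K] [CompleteSpace K] : IsRickart (K →L[𝕜] K) := by
  intro a
  have : CompleteSpace a.ker := a.isClosed_ker.completeSpace_coe
  refine ⟨a.ker.starProjection, isStarProjection_starProjection, fun x ↦ ?_⟩
  calc
    a * x = 0 ↔ ∀ v, x v ∈ a.ker := by simp [ContinuousLinearMap.ext_iff]
    _ ↔ _ := by
      simp [ContinuousLinearMap.ext_iff, ← Submodule.starProjection_eq_self_iff (K := a.ker)]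

end Rickart

section MatrixOfOperators

open ContinuousLinearMap

variable {𝕜 H κ : Type*} [RCLike 𝕜] [NormedAddCommGroup H] [InnerProductSpace 𝕜 H]
  [CompleteSpace H] [Fintype κ]

lemma adjoint_piLp_proj_apply [DecidableEq κ] (k : κ) (x : H) :
    adjoint (PiLp.proj (𝕜 := 𝕜) 2 (fun _ : κ ↦ H) k) x = PiLp.single 2 k x := by
  refine ext_inner_right 𝕜 fun y ↦ ?_
  rw [adjoint_inner_left, PiLp.inner_apply, Finset.sum_eq_single k]
  · simp
  · intro l _ hl
    simp [hl]
  · simp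

lemma sum_adjoint_piLp_proj_comp_proj :
    ∑ k, (PiLp.proj (𝕜 := 𝕜) 2 (fun _ : κ ↦ H) k)† ∘L PiLp.proj 2 (fun _ : κ ↦ H) k = 1 := by
  classical
  ext x l
  simp [sum_apply, adjoint_piLp_proj_apply, Pi.single_apply]

/-- Operators on `H^κ` as matrices of operators on `H`. -/
noncomputable def piLpEndEquivMatrix [DecidableEq κ] :
    (PiLp 2 (fun _ : κ ↦ H) →L[𝕜] PiLp 2 (fun _ : κ ↦ H)) ≃⋆+* Matrix κ κ (H →L[𝕜] H) where
  toFun T := .of fun k l ↦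
    PiLp.proj 2 (fun _ : κ ↦ H) k ∘L T ∘L (PiLp.proj 2 (fun _ : κ ↦ H) l)†
  invFun A := ∑ k, ∑ l,
    (PiLp.proj 2 (fun _ : κ ↦ H) k)† ∘L A k l ∘L PiLp.proj 2 (fun _ : κ ↦ H) l
  left_inv T := by
    calc
      _ = (∑ k, (PiLp.proj (𝕜 := 𝕜) 2 (fun _ : κ ↦ H) k)† ∘L PiLp.proj 2 (fun _ : κ ↦ H) k) ∘L T ∘L
          ∑ l, (PiLp.proj (𝕜 := 𝕜) 2 (fun _ : κ ↦ H) l)† ∘L PiLp.proj 2 (fun _ : κ ↦ H) l := by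
        simp only [finsetSum_comp, comp_finsetSum, Matrix.of_apply, comp_assoc]
        exact Finset.sum_comm
      _ = T := by simp only [sum_adjoint_piLp_proj_comp_proj]; rfl
  right_inv A := by
    ext k l x
    simp [sum_apply, adjoint_piLp_proj_apply, apply_ite]
  map_mul' S T := by
    ext1 k l
    calc
      _ = PiLp.proj 2 (fun _ : κ ↦ H) k ∘L S ∘L
          (∑ m, (PiLp.proj (𝕜 := 𝕜) 2 (fun _ : κ ↦ H) m)† ∘L PiLp.proj 2 (fun _ : κ ↦ H) m) ∘L
          T ∘L (PiLp.proj 2 (fun _ : κ ↦ H) l)† := by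
        rw [sum_adjoint_piLp_proj_comp_proj]; rfl
      _ = _ := by
        simp only [finsetSum_comp, comp_finsetSum, Matrix.mul_apply, Matrix.of_apply]; rfl
  map_add' S T := by
    ext1 k l
    simp
  map_star' T := by
    ext1 k l
    simp only [Matrix.of_apply, Matrix.star_apply, star_eq_adjoint, adjoint_comp, adjoint_adjoint,
      comp_assoc]

end MatrixOfOperators

section PermutationOperators

open ContinuousLinearMap

lemma memℓp_comp_equiv {α β E : Type*} [NormedAddCommGroup E] {p : ENNReal} (hp : 0 < p.toReal)
    (e : α ≃ β) {f : β → E} (hf : Memℓp f p) : Memℓp (f ∘ e) p := by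
  rw [memℓp_gen_iff hp] at hf ⊢
  exact e.summable_iff.2 hf

/-- The unitary representation of the permutations of `α` on `ℓ²(α, 𝕜)`, where `e` acts by
`f ↦ f ∘ e⁻¹`. -/
noncomputable def permRep (𝕜 α : Type*) [RCLike 𝕜] :
    Equiv.Perm α →* (ℓ²(α, 𝕜) →L[𝕜] ℓ²(α, 𝕜)) where
  toFun e := LinearIsometry.toContinuousLinearMap
    { toFun f := ⟨f ∘ e.symm, memℓp_comp_equiv (by norm_num) e.symm (lp.memℓp f)⟩
      map_add' _ _ := rfl
      map_smul' _ _ := rfl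
      norm_map' f := by
        simp only [lp.norm_eq_tsum_rpow (p := 2) (by norm_num)]
        congr 1
        exact e.symm.tsum_eq fun i ↦ ‖f i‖ ^ (2 : ENNReal).toReal }
  map_one' := rfl
  map_mul' _ _ := rfl

variable {𝕜 α : Type*} [RCLike 𝕜]

@[simp] lemma permRep_apply_apply (e : Equiv.Perm α) (f : ℓ²(α, 𝕜)) (i : α) :
    permRep 𝕜 α e f i = f (e.symm i) := rfl

lemma permRep_apply_single [DecidableEq α] (e : Equiv.Perm α) (i : α) (c : 𝕜) :
    permRep 𝕜 α e (lp.single 2 i c) = lp.single 2 (e i) c := by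
  ext j
  simp [Pi.single_apply, Equiv.symm_apply_eq]

lemma star_permRep (e : Equiv.Perm α) : star (permRep 𝕜 α e) = permRep 𝕜 α e⁻¹ := by
  rw [star_eq_adjoint, eq_comm, eq_adjoint_iff]
  intro f g
  rw [lp.inner_eq_tsum, lp.inner_eq_tsum, ← e.symm.tsum_eq]
  simp [Equiv.Perm.inv_def]

end PermutationOperators

section GroupVonNeumannAlgebra

open ContinuousLinearMap

variable (𝕜 G : Type*) [RCLike 𝕜] [Group G]

/-- The group von Neumann algebra of `G`, as the commutant of the right translations on
`ℓ²(G, 𝕜)`. -/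
noncomputable def groupVonNeumannAlgebra : StarSubalgebra 𝕜 (ℓ²(G, 𝕜) →L[𝕜] ℓ²(G, 𝕜)) :=
  StarSubalgebra.centralizer 𝕜 (Set.range fun h ↦ permRep 𝕜 G (Equiv.mulRight h))

variable {𝕜 G}

lemma mem_groupVonNeumannAlgebra {a : ℓ²(G, 𝕜) →L[𝕜] ℓ²(G, 𝕜)} :
    a ∈ groupVonNeumannAlgebra 𝕜 G ↔ ∀ h, Commute (permRep 𝕜 G (Equiv.mulRight h)) a := by
  simp only [groupVonNeumannAlgebra, StarSubalgebra.mem_centralizer_iff, Set.forall_mem_range,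
    star_permRep, Equiv.Perm.inv_def, Equiv.mulRight_symm]
  exact ⟨fun ha h ↦ (ha h).1, fun ha h ↦ ⟨ha h, ha h⁻¹⟩⟩

lemma isRickart_matrix_groupVonNeumannAlgebra {κ : Type*} [Fintype κ] [DecidableEq κ] :
    IsRickart (Matrix κ κ (groupVonNeumannAlgebra 𝕜 G)) :=
  have h : IsRickart (PiLp 2 (fun _ : κ ↦ ℓ²(G, 𝕜)) →L[𝕜] PiLp 2 (fun _ : κ ↦ ℓ²(G, 𝕜))) :=
    isRickart_continuousLinearMap
  (h.of_starRingEquiv piLpEndEquivMatrix).matrix_centralizer _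

lemma permRep_mulLeft_mem_groupVonNeumannAlgebra (g : G) :
    permRep 𝕜 G (Equiv.mulLeft g) ∈ groupVonNeumannAlgebra 𝕜 G := by
  refine mem_groupVonNeumannAlgebra.2 fun h ↦ ?_
  rw [Commute, SemiconjBy, ← map_mul, ← map_mul]
  congr 1
  ext x
  simp [mul_assoc]

variable (𝕜 G) in
/-- The left regular representation of the group algebra, valued in the group von Neumann
algebra. -/
noncomputable def leftRegular : MonoidAlgebra 𝕜 G →ₐ[𝕜] groupVonNeumannAlgebra 𝕜 G :=
  MonoidAlgebra.lift 𝕜 _ G <|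
    ((permRep 𝕜 G).comp (MulAction.toPermHom G G)).codRestrict (groupVonNeumannAlgebra 𝕜 G)
      permRep_mulLeft_mem_groupVonNeumannAlgebra

lemma coe_leftRegular_of (g : G) :
    (leftRegular 𝕜 G (.of 𝕜 G g) : ℓ²(G, 𝕜) →L[𝕜] ℓ²(G, 𝕜)) = permRep 𝕜 G (Equiv.mulLeft g) := by
  rw [leftRegular, MonoidAlgebra.lift_of]
  rfl

lemma star_leftRegular_of (g : G) :
    star (leftRegular 𝕜 G (.of 𝕜 G g)) = leftRegular 𝕜 G (.of 𝕜 G g⁻¹) := by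
  apply Subtype.ext
  rw [StarMemClass.coe_star, coe_leftRegular_of, coe_leftRegular_of, star_permRep]
  simp

lemma commute_star_leftRegular {w : MonoidAlgebra 𝕜 G} (hw : ∀ b, Commute w b)
    (b : MonoidAlgebra 𝕜 G) : Commute (star (leftRegular 𝕜 G w)) (leftRegular 𝕜 G b) := by
  induction b using MonoidAlgebra.induction_on with
  | of g =>
    rw [← inv_inv g, ← star_leftRegular_of, commute_star_star]
    exact (hw _).map _
  | add a b ha hb => rw [map_add]; exact ha.add_right hb
  | smul c a ha => rw [map_smul]; exact ha.smul_right c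

variable [DecidableEq G]

lemma groupVonNeumannAlgebra_apply_single_apply (a : groupVonNeumannAlgebra 𝕜 G) (g h : G) :
    a.1 (lp.single 2 h 1) g = a.1 (lp.single 2 1 1) (g * h⁻¹) := by
  have hδ : lp.single 2 h (1 : 𝕜) = permRep 𝕜 G (Equiv.mulRight h) (lp.single 2 1 1) := by
    simp [permRep_apply_single]
  rw [hδ, ← mul_apply_eq_comp, ← (mem_groupVonNeumannAlgebra.1 a.2 h).eq]
  simp

lemma groupVonNeumannAlgebra_mul_apply_one (a b : groupVonNeumannAlgebra 𝕜 G) :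
    (a * b).1 (lp.single 2 1 1) 1 =
      ∑' g, a.1 (lp.single 2 1 1) g⁻¹ * b.1 (lp.single 2 1 1) g := by
  have hadj : ∀ g, conj (adjoint a.1 (lp.single 2 1 1) g) = a.1 (lp.single 2 1 1) g⁻¹ := fun g ↦
    calc
      _ = inner 𝕜 (adjoint a.1 (lp.single 2 1 1)) (lp.single 2 g (1 : 𝕜)) := by
        simp [lp.inner_single_right]
      _ = a.1 (lp.single 2 g 1) 1 := by
        rw [adjoint_inner_left, lp.inner_single_left]; simp
      _ = _ := by rw [groupVonNeumannAlgebra_apply_single_apply, one_mul]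
  calc
    _ = inner 𝕜 (adjoint a.1 (lp.single 2 1 1)) (b.1 (lp.single 2 1 1)) := by
      rw [adjoint_inner_left, lp.inner_single_left]; simp
    _ = _ := by
      simp only [lp.inner_eq_tsum, RCLike.inner_apply', hadj]

/-- The real part of the von Neumann trace `a ↦ ⟪δ₁, a δ₁⟫`. -/
noncomputable def vonNeumannTrace : groupVonNeumannAlgebra 𝕜 G →+ ℝ where
  toFun a := RCLike.re (a.1 (lp.single 2 1 1) 1)
  map_zero' := by simp
  map_add' _ _ := by simp

lemma vonNeumannTrace_star_mul_self (a : groupVonNeumannAlgebra 𝕜 G) :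
    vonNeumannTrace (star a * a) = ‖a.1 (lp.single 2 1 1)‖ ^ 2 := by
  rw [← inner_self_eq_norm_sq (𝕜 := 𝕜), ← adjoint_inner_right, lp.inner_single_left]
  simp [vonNeumannTrace, star_eq_adjoint]

lemma isPositiveTrace_vonNeumannTrace :
    IsPositiveTrace (vonNeumannTrace : groupVonNeumannAlgebra 𝕜 G →+ ℝ) where
  map_mul_comm a b := congr_arg RCLike.re <| by
    rw [groupVonNeumannAlgebra_mul_apply_one, groupVonNeumannAlgebra_mul_apply_one,
      ← (Equiv.inv G).tsum_eq]
    simp [mul_comm]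
  map_star_mul_self_nonneg a := by
    rw [vonNeumannTrace_star_mul_self]
    positivity

lemma leftRegular_apply_single_one_apply (a : MonoidAlgebra 𝕜 G) (g : G) :
    (leftRegular 𝕜 G a).1 (lp.single 2 1 1) g = a.coeff g := by
  induction a using MonoidAlgebra.induction_on with
  | of x =>
    rw [coe_leftRegular_of, permRep_apply_single]
    simp [Pi.single_apply, Finsupp.single_apply, eq_comm]
  | add a b ha hb => simp [ha, hb]
  | smul c a ha => simp [ha]

lemma vonNeumannTrace_star_mul_leftRegular_pos {w : MonoidAlgebra 𝕜 G} (hw : w ≠ 0) :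
    0 < vonNeumannTrace (star (leftRegular 𝕜 G w) * leftRegular 𝕜 G w) := by
  have : (leftRegular 𝕜 G w).1 (lp.single 2 1 1) ≠ 0 := by
    contrapose! hw
    ext g
    rw [← leftRegular_apply_single_one_apply, hw]
    rfl
  rw [vonNeumannTrace_star_mul_self]
  positivity

end GroupVonNeumannAlgebra

section RankInequality

variable {𝕜 G ι : Type*} [RCLike 𝕜] [Group G] [Fintype ι] [DecidableEq ι]
  {w : MonoidAlgebra 𝕜 G}

theorem card_le_card_of_mul_eq_scalar {κ : Type*} [Fintype κ] (hw : ∀ b, Commute w b)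
    (hw0 : w ≠ 0) {N : Matrix ι κ (MonoidAlgebra 𝕜 G)} {M : Matrix κ ι (MonoidAlgebra 𝕜 G)}
    (hNM : N * M = Matrix.scalar ι w) : Fintype.card ι ≤ Fintype.card κ := by
  classical
  set L := leftRegular 𝕜 G
  have hLNM : N.map L * M.map L = Matrix.scalar ι (L w) := by
    rw [← Matrix.map_mul, hNM]
    simp [Matrix.diagonal_map]
  have hcomm : ∀ k i, Commute (star (L w) * L w) (M.map L k i) := fun k i ↦
    (commute_star_leftRegular hw _).mul_left ((hw _).map L)
  have hle := isPositiveTrace_vonNeumannTrace.card_mul_le_card_mul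
    isRickart_matrix_groupVonNeumannAlgebra hLNM hcomm
  exact_mod_cast le_of_mul_le_mul_right hle (vonNeumannTrace_star_mul_leftRegular_pos hw0)

theorem card_le_ncard_of_smul_single_mem_span (hw : ∀ b, Commute w b) (hw0 : w ≠ 0)
    {s : Set (ι → MonoidAlgebra 𝕜 G)} (hs : s.Finite)
    (hspan : ∀ i, w • Pi.single i 1 ∈ Submodule.span (MonoidAlgebra 𝕜 G) s) :
    Fintype.card ι ≤ s.ncard := by
  have := hs.fintype
  rw [← Nat.card_coe_set_eq, Nat.card_eq_fintype_card]
  simp only [← Subtype.range_coe (s := s), Submodule.mem_span_range_iff_exists_fun] at hspan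
  choose N hN using hspan
  refine card_le_card_of_mul_eq_scalar hw hw0 (N := .of N) (M := .of fun m ↦ m.1) ?_
  ext1 i j
  simpa [Matrix.mul_apply, Matrix.diagonal_apply, Pi.single_apply, eq_comm] using congr_fun (hN i) j

end RankInequality

section CrossedHom

variable {F A M : Type*} [Group F] [Ring A] [AddCommGroup M] [Module A M]

/-- Crossed homomorphisms (derivations) from `F` to the `A`-module `M`, on which `F` acts through
`π`. For a free group `F` these are the Fox derivatives. -/
def IsCrossedHom (π : F →* A) (D : F → M) : Prop :=
  ∀ u v, D (u * v) = D u + π u • D v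

namespace IsCrossedHom

variable {π : F →* A} {D : F → M}

lemma map_one (hD : IsCrossedHom π D) : D 1 = 0 := by
  simpa using hD 1 1

lemma map_inv (hD : IsCrossedHom π D) (u : F) : D u⁻¹ = -(π u⁻¹ • D u) := by
  rw [eq_neg_iff_add_eq_zero, ← hD, inv_mul_cancel, hD.map_one]

lemma map_conj (hD : IsCrossedHom π D) {r : F} (hr : π r = 1) (g : F) :
    D (g * r * g⁻¹) = π g • D r := by
  rw [hD, hD, hD.map_inv, map_mul, hr, mul_one, smul_neg, smul_smul, ← map_mul, mul_inv_cancel,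
    _root_.map_one, one_smul]
  abel

lemma mem_span_of_mem_normalClosure (hD : IsCrossedHom π D) {s : Set F} (hs : ∀ r ∈ s, π r = 1)
    {u : F} (hu : u ∈ Subgroup.normalClosure s) : D u ∈ Submodule.span A (D '' s) := by
  induction hu using Subgroup.closure_induction with
  | mem x hx =>
    obtain ⟨r, hr, hrx⟩ := Group.mem_conjugatesOfSet_iff.1 hx
    obtain ⟨g, rfl⟩ := isConj_iff.1 hrx
    rw [hD.map_conj (hs r hr)]
    exact Submodule.smul_mem _ _ (Submodule.subset_span ⟨r, hr, rfl⟩)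
  | one => rw [hD.map_one]; exact Submodule.zero_mem _
  | mul x y _ _ hx hy => rw [hD]; exact Submodule.add_mem _ hx (Submodule.smul_mem _ _ hy)
  | inv x _ hx =>
    rw [hD.map_inv]
    exact Submodule.neg_mem _ (Submodule.smul_mem _ _ hx)

lemma sub_one_smul (hD : IsCrossedHom π D) {t x : F} (h : π ⁅t, x⁆ = 1) :
    (π t - 1) • D x = D ⁅t, x⁆ + (π x - 1) • D t := by
  have htx : D (t * x) = D (⁅t, x⁆ * (x * t)) := by
    congr 1
    rw [commutatorElement_def]
    group
  rw [hD, hD, h, one_smul, hD] at htx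
  rw [sub_smul, sub_smul, one_smul, one_smul, sub_eq_iff_eq_add, ← add_left_cancel_iff (a := D t),
    htx]
  abel

lemma sub_one_smul_mem_span (hD : IsCrossedHom π D) {s : Set F} (hs : ∀ r ∈ s, π r = 1) {t x : F}
    (htx : ⁅t, x⁆ ∈ Subgroup.normalClosure s) :
    (π t - 1) • D x ∈ Submodule.span A (insert (D t) (D '' s)) := by
  have hle : Subgroup.normalClosure s ≤ π.ker := Subgroup.normalClosure_le_normal hs
  rw [hD.sub_one_smul (hle htx)]
  refine Submodule.add_mem _ ?_ (Submodule.smul_mem _ _ (Submodule.subset_span (.inl rfl)))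
  exact Submodule.span_mono (Set.subset_insert _ _) (hD.mem_span_of_mem_normalClosure hs htx)

end IsCrossedHom

lemma exists_isCrossedHom_freeGroup {X : Type*} (π : FreeGroup X →* A) (d : X → M) :
    ∃ D : FreeGroup X → M, IsCrossedHom π D ∧ ∀ x, D (.of x) = d x := by
  let : MulDistribMulAction (FreeGroup X) (Multiplicative M) :=
    { smul u m := .ofAdd (π u • m.toAdd)
      one_smul m := congr_arg Multiplicative.ofAdd (by rw [map_one, one_smul]; rfl)
      mul_smul u v m := congr_arg Multiplicative.ofAdd (by rw [map_mul, mul_smul]; rfl)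
      smul_one u := congr_arg Multiplicative.ofAdd (smul_zero (π u))
      smul_mul u m n := congr_arg Multiplicative.ofAdd (smul_add (π u) m.toAdd n.toAdd) }
  let φ := MulDistribMulAction.toMulAut (FreeGroup X) (Multiplicative M)
  let Φ : FreeGroup X →* Multiplicative M ⋊[φ] FreeGroup X :=
    FreeGroup.lift fun x ↦ ⟨.ofAdd (d x), .of x⟩
  have hright : ∀ u, (Φ u).right = u := DFunLike.congr_fun <|
    show SemidirectProduct.rightHom.comp Φ = .id _ by ext x; simp [Φ]
  refine ⟨fun u ↦ (Φ u).left.toAdd, fun u v ↦ ?_, fun x ↦ by simp [Φ]⟩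
  simp only [map_mul, SemidirectProduct.mul_left, hright]
  rfl

end CrossedHom

theorem card_le_ncard_add_one_of_mem_center {X : Type*} {s : Set (FreeGroup X)} (hs : s.Finite)
    {z : FreeGroup X ⧸ Subgroup.normalClosure s} (hz : z ∈ Subgroup.center _) (hz1 : z ≠ 1)
    (J : Finset X) : J.card ≤ s.ncard + 1 := by
  classical
  obtain ⟨t, rfl⟩ := QuotientGroup.mk_surjective z
  let q := QuotientGroup.mk' (Subgroup.normalClosure s)
  let π := (MonoidAlgebra.of ℂ (FreeGroup X ⧸ Subgroup.normalClosure s)).comp q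
  have hπ : ∀ r ∈ s, π r = 1 := fun r hr ↦ by
    have hr1 : q r = 1 := (QuotientGroup.eq_one_iff r).2 (Subgroup.subset_normalClosure hr)
    rw [MonoidHom.comp_apply, hr1, map_one]
  have htx : ∀ x, ⁅t, x⁆ ∈ Subgroup.normalClosure s := fun x ↦ by
    rw [← QuotientGroup.eq_one_iff]
    exact commutatorElement_eq_one_iff_mul_comm.2 (Subgroup.mem_center_iff.1 hz x).symm
  have hcomm : ∀ b, Commute (π t - 1) b := fun b ↦
    (MonoidAlgebra.of_commute (fun g ↦ (Subgroup.mem_center_iff.1 hz g).symm) b).sub_left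
      (.one_left b)
  have hne : π t - 1 ≠ 0 := sub_ne_zero.2 fun h ↦
    hz1 (MonoidAlgebra.of_injective (h.trans (map_one _).symm))
  obtain ⟨D, hD, hDx⟩ := exists_isCrossedHom_freeGroup
    (M := J → MonoidAlgebra ℂ (FreeGroup X ⧸ Subgroup.normalClosure s)) π
    fun x j ↦ if x = j then 1 else 0
  have hDj : ∀ j : J, D (.of j) = Pi.single j 1 := fun j ↦ by
    ext1 i
    simp [hDx, Pi.single_apply, eq_comm (a := j)]
  calc
    J.card = Fintype.card J := (Fintype.card_coe J).symm
    _ ≤ (insert (D t) (D '' s)).ncard :=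
      card_le_ncard_of_smul_single_mem_span hcomm hne ((hs.image D).insert (D t)) fun j ↦
        hDj j ▸ hD.sub_one_smul_mem_span hπ (htx (.of j))
    _ ≤ s.ncard + 1 :=
      (Set.ncard_insert_le _ _).trans (Nat.succ_le_succ (Set.ncard_image_le hs))

theorem freeGroup_oneRelator_center_trivial_general {X : Type*} {s : Set (FreeGroup X)}
    (hs : s.Finite) (hX : Cardinal.mk s + 2 ≤ Cardinal.mk X) :
    Subgroup.center (FreeGroup X ⧸ Subgroup.normalClosure s) = ⊥ := by
  obtain ⟨J, hJ⟩ := Cardinal.exists_finset_eq_card (α := X) (n := s.ncard + 2) <| by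
    simpa [Set.cast_ncard hs] using hX
  refine (Subgroup.eq_bot_iff_forall _).2 fun z hz ↦ of_not_not fun hz1 ↦ ?_
  have := card_le_ncard_add_one_of_mem_center hs hz hz1 J
  omega

/-- If `F` is a free group on a set with at least 3 elements and
`α ∈ F`, then the one-relator quotient `F/⟪α⟫` has trivial center. -/
theorem freeGroup_oneRelator_center_trivial {X : Type*} (hX : 3 ≤ Cardinal.mk X)
    (α : FreeGroup X) :
    Subgroup.center (FreeGroup X ⧸ Subgroup.normalClosure ({α} : Set (FreeGroup X))) = ⊥ := by
  refine freeGroup_oneRelator_center_trivial_general (Set.finite_singleton α) ?_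
  rwa [Cardinal.mk_singleton, show (1 + 2 : Cardinal) = 3 by norm_num]
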